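/- arXiv:1601.04856 — 3 statements merged into one kernel-verified Lean document; each statement's English description precedes it below -/
import Mathlib

section
/- For every hypergraph H that has at least one edge, the game transversal number satisfies τ(H) ≤ τ_g(H) ≤ 2τ(H) − 1. -/
variable {V : Type} [Fintype V] [DecidableEq V]

/-- The set of legal moves in the transversal game with uncovered edge set `E`:
the vertices hitting at least one uncovered edge. -/
def playable (E : Finset (Finset V)) : Finset V :=
  Finset.univ.filter (fun v => ∃ e ∈ E, v ∈ e)

/-- The number of moves remaining in the transversal game with uncovered edge set `E`
under optimal play, where `ehTurn = true` iff Edge-hitter (the minimizer) moves next;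
Staller (the maximizer) moves next iff `ehTurn = false`.  Each move must hit at least
one uncovered edge, and the game ends when no uncovered edge remains. -/
def gameVal (ehTurn : Bool) (E : Finset (Finset V)) : ℕ :=
  if h : (playable E).Nonempty then
    1 +
      (if ehTurn then
        (playable E).attach.inf' (Finset.attach_nonempty_iff.mpr h)
          (fun v => gameVal (!ehTurn) (E.filter (fun e => v.1 ∉ e)))
      else
        (playable E).attach.sup' (Finset.attach_nonempty_iff.mpr h)
          (fun v => gameVal (!ehTurn) (E.filter (fun e => v.1 ∉ e))))
  else 0
termination_by E.card
decreasing_by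
  all_goals
    obtain ⟨v, hv⟩ := v
    simp only [playable, Finset.mem_filter, Finset.mem_univ, true_and] at hv
    obtain ⟨e, he, hve⟩ := hv
    exact Finset.card_lt_card (Finset.filter_ssubset.mpr ⟨e, he, by simp [hve]⟩)

/-- The game transversal number `τ_g`: Edge-hitter makes the first move. -/
def gameTransversalNum (E : Finset (Finset V)) : ℕ := gameVal true E

/-- The Staller-start game transversal number `τ_g'`: Staller makes the first move. -/
def stallerGameTransversalNum (E : Finset (Finset V)) : ℕ := gameVal false E

/-- The transversal number `τ`: the minimum size of a set of vertices meeting all edges. -/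
noncomputable def transversalNum (E : Finset (Finset V)) : ℕ :=
  sInf {n | ∃ T : Finset V, (∀ e ∈ E, ∃ v ∈ T, v ∈ e) ∧ T.card = n}

theorem card_filter_lt_of_playable {V : Type} [Fintype V] [DecidableEq V]
    {E : Finset (Finset V)} {v : V} (hv : v ∈ playable E) :
    (E.filter (fun e => v ∉ e)).card < E.card := by
  simp only [playable, Finset.mem_filter, Finset.mem_univ, true_and] at hv
  obtain ⟨e, he, hve⟩ := hv
  exact Finset.card_lt_card (Finset.filter_ssubset.mpr ⟨e, he, by simp [hve]⟩)

/-- Some legal move realises the game value. -/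
theorem exists_gameVal_eq {V : Type} [Fintype V] [DecidableEq V] (b : Bool)
    (E : Finset (Finset V)) (h : (playable E).Nonempty) :
    ∃ v ∈ playable E, gameVal b E = 1 + gameVal (!b) (E.filter (fun e => v ∉ e)) := by
  rw [gameVal, dif_pos h]
  cases b
  · obtain ⟨v, -, hv⟩ := Finset.exists_mem_eq_sup' (Finset.attach_nonempty_iff.mpr h)
      (fun v : {x // x ∈ playable E} => gameVal (!false) (E.filter (fun e => v.1 ∉ e)))
    exact ⟨v.1, v.2, by simpa using hv⟩
  · obtain ⟨v, -, hv⟩ := Finset.exists_mem_eq_inf' (Finset.attach_nonempty_iff.mpr h)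
      (fun v : {x // x ∈ playable E} => gameVal (!true) (E.filter (fun e => v.1 ∉ e)))
    exact ⟨v.1, v.2, by simpa using hv⟩

theorem gameVal_true_le {V : Type} [Fintype V] [DecidableEq V]
    (E : Finset (Finset V)) {v : V} (hv : v ∈ playable E) :
    gameVal true E ≤ 1 + gameVal false (E.filter (fun e => v ∉ e)) := by
  rw [gameVal, dif_pos ⟨v, hv⟩, if_pos rfl]
  have := Finset.inf'_le (s := (playable E).attach)
    (fun v : {x // x ∈ playable E} => gameVal (!true) (E.filter (fun e => v.1 ∉ e)))
    (Finset.mem_attach _ ⟨v, hv⟩)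
  exact Nat.add_le_add_left this 1

/-- Every play yields a transversal. -/
theorem exists_transversal_le {V : Type} [Fintype V] [DecidableEq V] (n : ℕ) :
    ∀ (b : Bool) (E : Finset (Finset V)), E.card = n → (∀ e ∈ E, e.Nonempty) →
      ∃ T : Finset V, (∀ e ∈ E, ∃ v ∈ T, v ∈ e) ∧ T.card ≤ gameVal b E := by
  induction n using Nat.strong_induction_on with
  | _ n ih =>
    intro b E hn hE
    by_cases h : (playable E).Nonempty
    · obtain ⟨v, hv, hval⟩ := exists_gameVal_eq b E h
      obtain ⟨T, hT, hc⟩ := ih _ (hn ▸ card_filter_lt_of_playable hv) (!b) _ rfl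
        (fun e he => hE e (Finset.mem_filter.mp he).1)
      refine ⟨insert v T, fun e he => ?_, ?_⟩
      · by_cases hve : v ∈ e
        · exact ⟨v, Finset.mem_insert_self _ _, hve⟩
        · obtain ⟨w, hw, hwe⟩ := hT e (Finset.mem_filter.mpr ⟨he, hve⟩)
          exact ⟨w, Finset.mem_insert_of_mem hw, hwe⟩
      · have := Finset.card_insert_le v T
        omega
    · refine ⟨∅, fun e he => ?_, by simp⟩
      obtain ⟨v, hv⟩ := hE e he
      exact absurd ⟨v, by simpa [playable] using ⟨e, he, hv⟩⟩ h

/-- Edge-hitter can follow a fixed transversal. -/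
theorem gameVal_le_of_transversal {V : Type} [Fintype V] [DecidableEq V] (n : ℕ) :
    ∀ (E : Finset (Finset V)) (T : Finset V), E.card = n → (∀ e ∈ E, ∃ v ∈ T, v ∈ e) →
      gameVal true E ≤ 2 * T.card - 1 ∧ gameVal false E ≤ 2 * T.card := by
  induction n using Nat.strong_induction_on with
  | _ n ih =>
    intro E T hn hT
    by_cases h : (playable E).Nonempty
    · obtain ⟨u, hu⟩ := id h
      simp only [playable, Finset.mem_filter, Finset.mem_univ, true_and] at hu
      obtain ⟨e, he, -⟩ := hu
      obtain ⟨v, hvT, hve⟩ := hT e he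
      have hv : v ∈ playable E := by simpa [playable] using ⟨e, he, hve⟩
      have hpos : 0 < T.card := Finset.card_pos.mpr ⟨v, hvT⟩
      constructor
      · have h1 := gameVal_true_le E hv
        have h2 := (ih _ (hn ▸ card_filter_lt_of_playable hv) _ (T.erase v) rfl
          (fun f hf => by
            obtain ⟨hfE, hvf⟩ := Finset.mem_filter.mp hf
            obtain ⟨w, hw, hwf⟩ := hT f hfE
            exact ⟨w, Finset.mem_erase.mpr ⟨fun hwv => hvf (hwv ▸ hwf), hw⟩, hwf⟩)).2
        rw [Finset.card_erase_of_mem hvT] at h2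
        omega
      · obtain ⟨w, hw, hval⟩ := exists_gameVal_eq false E h
        have h2 := (ih _ (hn ▸ card_filter_lt_of_playable hw) _ T rfl
          (fun f hf => hT f (Finset.mem_filter.mp hf).1)).1
        rw [Bool.not_false] at hval
        omega
    · constructor <;> (rw [gameVal, dif_neg h]; exact Nat.zero_le _)

/-- For every hypergraph `H` with at least one edge, `τ(H) ≤ τ_g(H) ≤ 2τ(H) - 1`. -/
theorem tau_le_gameTransversalNum_le_two_tau_sub_one
    {V : Type} [Fintype V] [DecidableEq V] (E : Finset (Finset V))
    (hedge : ∀ e ∈ E, e.Nonempty) (hE : E.Nonempty) :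
    transversalNum E ≤ gameTransversalNum E ∧
      gameTransversalNum E ≤ 2 * transversalNum E - 1 := by
  constructor
  · obtain ⟨T, hT, hc⟩ := exists_transversal_le E.card true E rfl hedge
    have h1 : transversalNum E ≤ T.card := Nat.sInf_le ⟨T, hT, rfl⟩
    exact h1.trans hc
  · obtain ⟨T0, hT0, -⟩ := exists_transversal_le E.card true E rfl hedge
    obtain ⟨T, hT, hc⟩ := Nat.sInf_mem
      (s := {n | ∃ T : Finset V, (∀ e ∈ E, ∃ v ∈ T, v ∈ e) ∧ T.card = n}) ⟨_, T0, hT0, rfl⟩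
    have := (gameVal_le_of_transversal E.card E T rfl hT).1
    rw [hc] at this
    exact this
end

section
/- If H is a 3-uniform hypergraph, then the Staller-start game transversal number satisfies τ_g'(H) ≤ (1/16)(5 n(H) + 5 m(H) + 6). -/
variable {V : Type} [Fintype V] [DecidableEq V]

/-- Weight of a vertex of degree `d`. -/
def wt (d : ℕ) : ℕ := if d = 0 then 0 else if d = 1 then 16 else if d = 2 then 24 else 15 + 5 * d

def dg (E : Finset (Finset V)) (v : V) : ℕ := (E.filter (fun e => v ∈ e)).card

def del (E : Finset (Finset V)) (v : V) : Finset (Finset V) := E.filter (fun e => v ∉ e)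

def cod (E : Finset (Finset V)) (v u : V) : ℕ := (E.filter (fun e => v ∈ e ∧ u ∈ e)).card

def W (E : Finset (Finset V)) : ℕ := ∑ v, wt (dg E v)

lemma dg_split (E : Finset (Finset V)) (v u : V) : dg E u = dg (del E v) u + cod E v u := by
  unfold dg del cod
  rw [← Finset.card_filter_add_card_filter_not (s := E.filter (fun e => u ∈ e)) (fun e => v ∉ e)]
  rw [Finset.filter_filter, Finset.filter_filter, Finset.filter_filter]
  congr 2
  · ext e; simp; tauto
  · ext e; simp; tauto

lemma cod_self (E : Finset (Finset V)) (v : V) : cod E v v = dg E v := by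
  simp [cod, dg]

lemma dg_del_self (E : Finset (Finset V)) (v : V) : dg (del E v) v = 0 := by
  have := dg_split E v v
  rw [cod_self] at this; omega

lemma sum_inc (E : Finset (Finset V)) (P : V → Prop) [DecidablePred P] :
    ∑ u ∈ Finset.univ.filter P, dg E u = ∑ e ∈ E, (e.filter P).card := by
  unfold dg
  have := Finset.sum_card_bipartiteAbove_eq_sum_card_bipartiteBelow
    (s := Finset.univ.filter P) (t := E) (fun (u : V) (e : Finset V) => u ∈ e)
  unfold Finset.bipartiteAbove Finset.bipartiteBelow at this
  rw [this]
  refine Finset.sum_congr rfl fun e _ => ?_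
  congr 1
  ext x; simp; tauto

lemma sum_dg (E : Finset (Finset V)) (h3 : ∀ e ∈ E, e.card = 3) :
    ∑ u, dg E u = 3 * E.card := by
  have := sum_inc E (fun _ => True)
  simp only [Finset.filter_true] at this
  rw [this, Finset.sum_congr rfl h3]
  simp [mul_comm]

lemma sum_cod (E : Finset (Finset V)) (h3 : ∀ e ∈ E, e.card = 3) (v : V) :
    ∑ u, cod E v u = 3 * dg E v := by
  have := sum_dg (E.filter (fun e => v ∈ e)) (fun e he => h3 e (Finset.mem_filter.mp he).1)
  unfold dg at this
  simp only [Finset.filter_filter] at this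
  exact this

lemma gain (E : Finset (Finset V)) (h3 : ∀ e ∈ E, e.card = 3) (v : V) (c : ℕ) (g : V → ℕ)
    (hv : g v = 0)
    (h : ∀ u, u ≠ v → wt (dg (del E v) u) + c * cod E v u + g u ≤ wt (dg E u)) :
    W (del E v) + wt (dg E v) + 2 * c * dg E v + ∑ u, g u ≤ W E := by
  have key : ∑ u, (wt (dg (del E v) u) + c * cod E v u + g u + if u = v then wt (dg E v) else 0)
      ≤ ∑ u, (wt (dg E u) + if u = v then c * dg E v else 0) := by
    refine Finset.sum_le_sum fun u _ => ?_
    by_cases hu : u = v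
    · subst hu
      simp [dg_del_self, cod_self, hv, wt]; omega
    · simpa [hu] using h u hu
  simp only [Finset.sum_add_distrib, ← Finset.mul_sum, sum_cod E h3 v] at key
  simp only [Finset.sum_ite_eq', Finset.mem_univ, if_true] at key
  unfold W
  linarith

/-- Admissible slope `c` for degrees at most `D`. -/
def Slope (E : Finset (Finset V)) (c : ℕ) : Prop :=
  ∀ u, ∀ a k, a + k ≤ dg E u → wt a + c * k ≤ wt (a + k)

lemma gain0 (E : Finset (Finset V)) (h3 : ∀ e ∈ E, e.card = 3) (v : V) (c : ℕ)
    (hs : Slope E c) :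
    W (del E v) + wt (dg E v) + 2 * c * dg E v ≤ W E := by
  have := gain E h3 v c (fun _ => 0) rfl (fun u _ => by
    have h := dg_split E v u
    have := hs u _ _ h.ge
    rw [h]; omega)
  simpa using this

lemma gain1 (E : Finset (Finset V)) (h3 : ∀ e ∈ E, e.card = 3) (v w : V) (hw : w ≠ v) (c b : ℕ)
    (hs : Slope E c) (hb : wt (dg (del E v) w) + c * cod E v w + b ≤ wt (dg E w)) :
    W (del E v) + wt (dg E v) + 2 * c * dg E v + b ≤ W E := by
  have := gain E h3 v c (fun u => if u = w then b else 0) (by simp [hw.symm]) (fun u _ => by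
    by_cases hu : u = w
    · subst hu; simpa using hb
    · have h := dg_split E v u
      have := hs u _ _ h.ge
      simp only [hu, if_false]
      rw [h]; omega)
  simpa using this

lemma slope5 (E : Finset (Finset V)) : Slope E 5 := by
  intro u a k _
  unfold wt; split_ifs <;> omega

lemma slope6 (E : Finset (Finset V)) (h : ∀ u, dg E u ≤ 3) : Slope E 6 := by
  intro u a k hh
  have := h u
  unfold wt; split_ifs <;> omega

lemma slope8 (E : Finset (Finset V)) (h : ∀ u, dg E u ≤ 2) : Slope E 8 := by
  intro u a k hh
  have := h u
  unfold wt; split_ifs <;> omega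

lemma slope16 (E : Finset (Finset V)) (h : ∀ u, dg E u ≤ 1) : Slope E 16 := by
  intro u a k hh
  have := h u
  unfold wt; split_ifs <;> omega

lemma slope_del (E : Finset (Finset V)) (v : V) (c : ℕ) (h : Slope E c) : Slope (del E v) c := by
  intro u a k hh
  exact h u a k (by have := dg_split E v u; omega)

lemma unif_del (E : Finset (Finset V)) (v : V) (h3 : ∀ e ∈ E, e.card = 3) :
    ∀ e ∈ del E v, e.card = 3 := fun e he => h3 e (Finset.mem_filter.mp he).1

lemma playable_iff (E : Finset (Finset V)) (v : V) : v ∈ playable E ↔ 1 ≤ dg E v := by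
  unfold playable dg
  rw [Nat.one_le_iff_ne_zero, ← Nat.pos_iff_ne_zero, Finset.card_pos]
  simp [Finset.Nonempty]

lemma val_true (E : Finset (Finset V)) (v : V) (hv : 1 ≤ dg E v) :
    gameVal true E ≤ 1 + gameVal false (del E v) := by
  rw [← playable_iff] at hv
  rw [gameVal, dif_pos ⟨v, hv⟩]
  simp only [if_true, Bool.not_true]
  have := Finset.inf'_le (s := (playable E).attach)
    (fun v => gameVal false (E.filter (fun e => v.1 ∉ e))) (Finset.mem_attach _ ⟨v, hv⟩)
  exact Nat.add_le_add_left this 1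

lemma val_true_zero (E : Finset (Finset V)) (h : ∀ v, dg E v = 0) : gameVal true E = 0 := by
  rw [gameVal, dif_neg]
  rintro ⟨v, hv⟩
  rw [playable_iff, h] at hv; omega

lemma val_false (E : Finset (Finset V)) (B : ℕ)
    (h : ∀ v, 1 ≤ dg E v → 1 + gameVal true (del E v) ≤ B) : gameVal false E ≤ B := by
  rw [gameVal]
  by_cases hh : (playable E).Nonempty
  · rw [dif_pos hh, if_neg (by simp)]
    simp only [Bool.not_false]
    obtain ⟨⟨v, hv⟩, _, h2⟩ := Finset.exists_mem_eq_sup'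
      (Finset.attach_nonempty_iff.mpr hh) (fun v => gameVal true (E.filter (fun e => v.1 ∉ e)))
    rw [h2]
    exact h v ((playable_iff _ _).mp hv)
  · rw [dif_neg hh]
    exact Nat.zero_le _

lemma del_card_lt (E : Finset (Finset V)) (v : V) (hv : 1 ≤ dg E v) : (del E v).card < E.card := by
  have := Finset.card_filter_add_card_filter_not (s := E) (fun e => v ∈ e)
  unfold dg at hv; unfold del; omega

lemma step (E : Finset (Finset V)) (h3 : ∀ e ∈ E, e.card = 3)
    (ih : ∀ E' : Finset (Finset V), E'.card < E.card → (∀ e ∈ E', e.card = 3) →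
      48 * gameVal true E' ≤ W E')
    (v : V) (hv : 1 ≤ dg E v) (s : ℕ) (h1 : 48 ≤ W E)
    (h2 : ∀ u, 1 ≤ dg (del E v) u → W (del (del E v) u) + 96 ≤ W E + s) :
    48 * gameVal true E ≤ W E + s := by
  have h := val_true E v hv
  have h' : gameVal false (del E v) ≤ (W E + s - 48) / 48 := by
    apply val_false
    intro u hu
    have a := ih (del (del E v) u) ((del_card_lt _ u hu).trans (del_card_lt _ v hv))
      (unif_del _ _ (unif_del _ _ h3))
    have b := h2 u hu
    omega
  omega

lemma cod_pos (E : Finset (Finset V)) (v w : V) (e : Finset V) (he : e ∈ E) (hv : v ∈ e)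
    (hw : w ∈ e) : 1 ≤ cod E v w :=
  Finset.card_pos.mpr ⟨e, by simp [he, hv, hw]⟩

lemma cod_le (E : Finset (Finset V)) (v w : V) : cod E v w ≤ dg E v := by
  apply Finset.card_le_card
  intro e; simp; tauto

lemma cod_comm (E : Finset (Finset V)) (v w : V) : cod E v w = cod E w v := by
  simp [cod, and_comm]

lemma mod24 (E : Finset (Finset V)) (h3 : ∀ e ∈ E, e.card = 3) (h2 : ∀ u, dg E u ≤ 2)
    (hc : ∀ v w, dg E v = 2 → dg E w = 1 → cod E v w = 0) : 24 ∣ W E := by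
  have hA : 3 ∣ ((Finset.univ : Finset V).filter (fun u => dg E u = 1)).card := by
    have h := sum_inc E (fun u => dg E u = 1)
    rw [Finset.sum_congr rfl (g := fun _ => 1) (fun x hx => (Finset.mem_filter.mp hx).2)] at h
    simp only [Finset.sum_const, smul_eq_mul, mul_one] at h
    rw [h]
    apply Finset.dvd_sum
    intro e he
    by_cases hx : ∃ x ∈ e, dg E x = 1
    · obtain ⟨x, hxe, hx1⟩ := hx
      rw [Finset.filter_true_of_mem, h3 e he]
      intro y hy
      have p := cod_pos E y x e he hy hxe
      have q := cod_le E y x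
      have r := h2 y
      by_contra hne
      have := hc y x (by omega) hx1
      omega
    · push Not at hx
      rw [Finset.filter_false_of_mem hx]; simp
  have hW : W E = ∑ u, ((if dg E u = 1 then 16 else 0) + 24 * (if dg E u = 2 then 1 else 0)) := by
    refine Finset.sum_congr rfl fun u _ => ?_
    have := h2 u
    unfold wt; split_ifs <;> omega
  rw [hW, Finset.sum_add_distrib, ← Finset.mul_sum, ← Finset.sum_filter]
  simp only [Finset.sum_const, smul_eq_mul]
  omega

lemma main_true (n : ℕ) : ∀ E : Finset (Finset V), E.card = n → (∀ e ∈ E, e.card = 3) →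
      48 * gameVal true E ≤ W E := by
  induction n using Nat.strong_induction_on with
  | _ n IH =>
  intro E hn h3
  have ih : ∀ E' : Finset (Finset V), E'.card < E.card → (∀ e ∈ E', e.card = 3) →
      48 * gameVal true E' ≤ W E' := fun E' h h' => IH _ (hn ▸ h) E' rfl h'
  by_cases H4 : ∃ v, 4 ≤ dg E v
  · obtain ⟨v, hv⟩ := H4
    have g1 := gain0 E h3 v 5 (slope5 E)
    have w1 : wt (dg E v) = 15 + 5 * dg E v := by unfold wt; split_ifs <;> omega
    refine step E h3 ih v (by omega) 0 (by omega) fun u hu => ?_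
    have g2 := gain0 _ (unif_del E v h3) u 5 (slope5 _)
    have w2 : 16 ≤ wt (dg (del E v) u) := by unfold wt; split_ifs <;> omega
    omega
  push Not at H4
  have D3 : ∀ u, dg E u ≤ 3 := fun u => by have := H4 u; omega
  have S6 := slope6 E D3
  by_cases H3 : ∃ v, dg E v = 3
  · by_cases O3 : ∃ v w, dg E v = 3 ∧ dg E w ≤ 2 ∧ 1 ≤ cod E v w
    · obtain ⟨v, w, hv, hw, hc⟩ := O3
      have g1 := gain1 E h3 v w (by rintro rfl; omega) 6 2 S6 (by
        have := dg_split E v w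
        unfold wt; split_ifs <;> omega)
      have w1 : wt (dg E v) = 30 := by rw [hv]; rfl
      refine step E h3 ih v (by omega) 0 (by omega) fun u hu => ?_
      have g2 := gain0 _ (unif_del E v h3) u 6 (slope_del _ _ _ S6)
      have w2 : 16 ≤ wt (dg (del E v) u) := by unfold wt; split_ifs <;> omega
      omega
    · push Not at O3
      obtain ⟨v, hv⟩ := H3
      have g1 := gain0 E h3 v 6 S6
      have w1 : wt (dg E v) = 30 := by rw [hv]; rfl
      refine step E h3 ih v (by omega) 0 (by omega) fun u hu => ?_
      have S6' := slope_del E v _ S6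
      have h3' := unif_del E v h3
      have g2 := gain0 _ h3' u 6 S6'
      by_cases hu2 : 2 ≤ dg (del E v) u
      · have w2 : 16 ≤ wt (dg (del E v) u) := by unfold wt; split_ifs <;> omega
        omega
      have hu1 : dg (del E v) u = 1 := by omega
      have w2 : wt (dg (del E v) u) = 16 := by rw [hu1]; rfl
      -- another vertex on the edge of u
      obtain ⟨e, he⟩ := Finset.card_pos.mp (show 0 < dg (del E v) u by omega)
      rw [Finset.mem_filter] at he
      obtain ⟨y, hy, hyu⟩ := Finset.exists_mem_ne (by rw [h3' e he.1]; norm_num) u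
      have c1 := cod_pos _ u y e he.1 he.2 hy
      have c2 := cod_le (del E v) u y
      have sy := dg_split (del E v) u y
      have sy0 := dg_split E v y
      have dy := D3 y
      by_cases hy2 : dg (del E v) y ≤ 2
      · have g2' := gain1 _ h3' u y hyu 6 2 S6' (by
          unfold wt; split_ifs <;> omega)
        omega
      · have c3 := cod_pos E y u e (Finset.mem_filter.mp he.1).1 hy he.2
        have du : dg E u = 3 := by
          by_contra hne
          have := O3 y u (by omega) (by have := D3 u; omega)
          omega
        have huv : u ≠ v := by
          rintro rfl
          rw [dg_del_self] at hu1; omega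
        have g1' := gain1 E h3 v u huv 6 2 S6 (by
          have := dg_split E v u
          have hcc : cod E v u = 2 := by omega
          rw [hu1, hcc, du]; decide)
        omega
  push Not at H3
  have D2 : ∀ u, dg E u ≤ 2 := fun u => by have := D3 u; have := H3 u; omega
  have S8 := slope8 E D2
  by_cases H2 : ∃ v, dg E v = 2
  · by_cases O2 : ∃ v w, dg E v = 2 ∧ dg E w = 1 ∧ cod E v w ≠ 0
    · obtain ⟨v, w, hv, hw, hc⟩ := O2
      have g1 := gain1 E h3 v w (by rintro rfl; omega) 8 8 S8 (by
        have := dg_split E v w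
        unfold wt; split_ifs <;> omega)
      have w1 : wt (dg E v) = 24 := by rw [hv]; rfl
      refine step E h3 ih v (by omega) 0 (by omega) fun u hu => ?_
      have g2 := gain0 _ (unif_del E v h3) u 8 (slope_del _ _ _ S8)
      have w2 : 16 ≤ wt (dg (del E v) u) := by unfold wt; split_ifs <;> omega
      omega
    · push Not at O2
      obtain ⟨v, hv⟩ := H2
      have g1 := gain0 E h3 v 8 S8
      have w1 : wt (dg E v) = 24 := by rw [hv]; rfl
      have key := step E h3 ih v (by omega) 8 (by omega) fun u hu => by
        have g2 := gain0 _ (unif_del E v h3) u 8 (slope_del _ _ _ S8)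
        have w2 : 16 ≤ wt (dg (del E v) u) := by unfold wt; split_ifs <;> omega
        omega
      have := mod24 E h3 D2 O2
      omega
  push Not at H2
  have D1 : ∀ u, dg E u ≤ 1 := fun u => by have := D2 u; have := H2 u; omega
  have S16 := slope16 E D1
  by_cases H1 : ∃ v, dg E v = 1
  · obtain ⟨v, hv⟩ := H1
    have g1 := gain0 E h3 v 16 S16
    have w1 : wt (dg E v) = 16 := by rw [hv]; rfl
    refine step E h3 ih v (by omega) 0 (by omega) fun u hu => ?_
    have g2 := gain0 _ (unif_del E v h3) u 16 (slope_del _ _ _ S16)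
    have w2 : 16 ≤ wt (dg (del E v) u) := by unfold wt; split_ifs <;> omega
    omega
  push Not at H1
  rw [val_true_zero E fun u => by have := D1 u; have := H1 u; omega]
  simp

lemma W_le (E : Finset (Finset V)) (h3 : ∀ e ∈ E, e.card = 3) (v : V) (hv : dg E v = 0) :
    W E + 15 ≤ 15 * Fintype.card V + 15 * E.card := by
  have key : ∑ u, (wt (dg E u) + if u = v then 15 else 0) ≤ ∑ u, (15 + 5 * dg E u) := by
    refine Finset.sum_le_sum fun u _ => ?_
    by_cases hu : u = v
    · subst hu; simp [hv, wt]
    · simp only [hu, if_false]; unfold wt; split_ifs <;> omega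
  simp only [Finset.sum_add_distrib, ← Finset.mul_sum, sum_dg E h3] at key
  simp only [Finset.sum_ite_eq', Finset.mem_univ, if_true, Finset.sum_const, smul_eq_mul,
    Finset.card_univ] at key
  unfold W
  omega

/-- If `H` is a `3`-uniform hypergraph, then `τ_g'(H) ≤ (1/16)(5 n(H) + 5 m(H) + 6)`. -/
theorem stallerGameTransversalNum_le_of_three_uniform
    {V : Type} [Fintype V] [DecidableEq V] (E : Finset (Finset V))
    (h3 : ∀ e ∈ E, e.card = 3) :
    (stallerGameTransversalNum E : ℚ) ≤
      (1 / 16) * (5 * Fintype.card V + 5 * E.card + 6) := by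
  have h : stallerGameTransversalNum E ≤ (15 * Fintype.card V + 15 * E.card + 18) / 48 := by
    apply val_false
    intro v hv
    have a := main_true _ (del E v) rfl (unif_del E v h3)
    have b := W_le (del E v) (unif_del E v h3) v (dg_del_self E v)
    have c := del_card_lt E v hv
    omega
  have h' : 48 * stallerGameTransversalNum E ≤ 15 * Fintype.card V + 15 * E.card + 18 := by omega
  have h'' : (48 * stallerGameTransversalNum E : ℚ) ≤ 15 * Fintype.card V + 15 * E.card + 18 := by
    exact_mod_cast h'
  linarith
end

section
/- If H is a 4-uniform hypergraph with maximum degree Δ(H) ≤ 2, then τ_g(H) ≤ (7/18) n(H). -/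
variable {V : Type} [Fintype V] [DecidableEq V]

namespace TG

section Abs
variable {α : Type} [DecidableEq α] (μ : α → α → ℤ)

/-- residual degree -/
def dg (S : Finset α) (e : α) : ℤ := ∑ f ∈ S, μ e f

/-- potential -/
def Phi (S : Finset α) : ℤ := ∑ e ∈ S, (18 - dg μ S e)

/-- active state -/
def Act (S : Finset α) : Prop := ∃ p ∈ S, 1 ≤ dg μ S p ∧ dg μ S p ≤ 3

open Classical in
/-- corrected potential -/
noncomputable def gp (S : Finset α) : ℤ := Phi μ S - if Act μ S then 2 else 0

/-- legal replies in the abstract game -/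
def Reply (S T : Finset α) : Prop :=
  (∃ x ∈ S, dg μ S x ≤ 3 ∧ T = S.erase x) ∨
  (∃ x ∈ S, ∃ y ∈ S, x ≠ y ∧ 0 < μ x y ∧ T = (S.erase x).erase y)

/-- moves that Edge-hitter uses -/
def EMove (S T : Finset α) : Prop :=
  (∃ x ∈ S, (∀ y ∈ S, dg μ S y = 0) ∧ T = S.erase x) ∨
  (∃ x ∈ S, ∃ y ∈ S, x ≠ y ∧ 0 < μ x y ∧ T = (S.erase x).erase y)

variable {μ}

theorem gp_le (S : Finset α) : gp μ S ≤ Phi μ S := by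
  unfold gp; split_ifs <;> omega

theorem gp_act {S : Finset α} (h : Act μ S) : gp μ S = Phi μ S - 2 := by
  unfold gp; rw [if_pos h]

theorem gp_nact {S : Finset α} (h : ¬ Act μ S) : gp μ S = Phi μ S := by
  unfold gp; rw [if_neg h]; omega

theorem dg_erase {S : Finset α} {a : α} (ha : a ∈ S) (e : α) :
    dg μ (S.erase a) e = dg μ S e - μ e a := by
  unfold dg
  rw [← Finset.add_sum_erase S _ ha]; ring

theorem Phi_erase (hs : ∀ a b, μ a b = μ b a) (h0 : ∀ a, μ a a = 0) {S : Finset α} {a : α}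
    (ha : a ∈ S) : Phi μ (S.erase a) = Phi μ S - 18 + 2 * dg μ S a := by
  have h1 : Phi μ (S.erase a) = ∑ e ∈ S.erase a, ((18 - dg μ S e) + μ a e) := by
    unfold Phi
    apply Finset.sum_congr rfl
    intro e _
    rw [dg_erase ha, hs e a]; ring
  rw [h1, Finset.sum_add_distrib]
  have h2 := Finset.add_sum_erase S (fun e => 18 - dg μ S e) ha
  have h3 := Finset.add_sum_erase S (fun e => μ a e) ha
  simp only [h0] at h3
  have h4 : ∑ e ∈ S, μ a e = dg μ S a := rfl
  have h5 : ∑ e ∈ S, (18 - dg μ S e) = Phi μ S := rfl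
  linarith

theorem Phi_erase2 (hs : ∀ a b, μ a b = μ b a) (h0 : ∀ a, μ a a = 0) {S : Finset α} {a b : α}
    (ha : a ∈ S) (hb : b ∈ S) (hab : a ≠ b) :
    Phi μ ((S.erase a).erase b) = Phi μ S - 36 + 2 * (dg μ S a + dg μ S b - μ a b) := by
  rw [Phi_erase hs h0 (Finset.mem_erase.2 ⟨hab.symm, hb⟩), Phi_erase hs h0 ha, dg_erase ha, hs b a]
  ring

theorem Phi_nonneg {S : Finset α} (h4 : ∀ e ∈ S, dg μ S e ≤ 4) : 0 ≤ Phi μ S :=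
  Finset.sum_nonneg fun e he => by have := h4 e he; omega

theorem dg_mono (hn : ∀ a b, 0 ≤ μ a b) {S T : Finset α} (h : T ⊆ S) (e : α) :
    dg μ T e ≤ dg μ S e :=
  Finset.sum_le_sum_of_subset_of_nonneg h fun _ _ _ => hn _ _

theorem le_dg (hn : ∀ a b, 0 ≤ μ a b) {S : Finset α} {a : α} (h : a ∈ S) (e : α) :
    μ e a ≤ dg μ S e :=
  Finset.single_le_sum (f := fun f => μ e f) (fun _ _ => hn _ _) h

theorem reply_bound (hs : ∀ a b, μ a b = μ b a) (h0 : ∀ a, μ a a = 0) {S T : Finset α}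
    (h4 : ∀ e ∈ S, dg μ S e ≤ 4) (h : Reply μ S T) :
    Phi μ T ≤ Phi μ S - 14 ∨
      (Phi μ T = Phi μ S - 12 ∧ ∃ x ∈ S, dg μ S x = 3 ∧ T = S.erase x) := by
  rcases h with ⟨x, hx, hd, rfl⟩ | ⟨x, hx, y, hy, hxy, hm, rfl⟩
  · have := Phi_erase hs h0 hx
    by_cases h3 : dg μ S x = 3
    · right; exact ⟨by omega, x, hx, h3, rfl⟩
    · left; omega
  · left
    have := Phi_erase2 hs h0 hx hy hxy
    have := h4 x hx
    have := h4 y hy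
    omega

theorem exists_nbr {S : Finset α} {e : α} (h : 0 < dg μ S e) : ∃ f ∈ S, 0 < μ e f := by
  by_contra! hc
  have : dg μ S e ≤ 0 := Finset.sum_nonpos hc
  omega

theorem strategy (hs : ∀ a b, μ a b = μ b a) (h0 : ∀ a, μ a a = 0) (hn : ∀ a b, 0 ≤ μ a b)
    {S : Finset α} (hne : S.Nonempty) (h4 : ∀ e ∈ S, dg μ S e ≤ 4) :
    ∃ T, EMove μ S T ∧ 18 ≤ gp μ S ∧ ∀ U, Reply μ T U → gp μ U + 36 ≤ gp μ S := by
  have hne' : ∀ {a b : α}, 0 < μ a b → a ≠ b := by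
    rintro a b h rfl; rw [h0] at h; omega
  have sub4 : ∀ T, T ⊆ S → ∀ e ∈ T, dg μ T e ≤ 4 := fun T hT e he =>
    (dg_mono hn hT e).trans (h4 e (hT he))
  have sub2 : ∀ a b : α, (S.erase a).erase b ⊆ S := fun a b =>
    (Finset.erase_subset _ _).trans (Finset.erase_subset _ _)
  by_cases hA : Act μ S
  · rw [gp_act hA]
    by_cases hex : ∃ a ∈ S, ∃ b ∈ S, 0 < μ a b ∧ dg μ S a + dg μ S b - μ a b ≤ 5
    · obtain ⟨a, ha, b, hb, hab, h5⟩ := hex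
      have hP := Phi_erase2 hs h0 ha hb (hne' hab)
      have hT4 := sub4 _ (sub2 a b)
      have hnn := Phi_nonneg hT4
      refine ⟨_, Or.inr ⟨a, ha, b, hb, hne' hab, hab, rfl⟩, by omega, ?_⟩
      intro U hU
      have := gp_le (μ := μ) U
      rcases reply_bound hs h0 hT4 hU with h | ⟨h, -⟩ <;> omega
    · push Not at hex
      obtain ⟨p, hp, hp1, hp3⟩ := hA
      obtain ⟨v, hv, hpv⟩ := exists_nbr (by omega : 0 < dg μ S p)
      have e1 := hex p hp v hv hpv
      have e2 := h4 v hv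
      have hdp : dg μ S p = 3 := by omega
      have hdv : dg μ S v = 4 := by omega
      have hmpv : μ p v = 1 := by omega
      have hP := Phi_erase2 hs h0 hp hv (hne' hpv)
      have hT4 := sub4 _ (sub2 p v)
      have hnn := Phi_nonneg hT4
      refine ⟨_, Or.inr ⟨p, hp, v, hv, hne' hpv, hpv, rfl⟩, by omega, ?_⟩
      intro U hU
      have hgU := gp_le (μ := μ) U
      rcases reply_bound hs h0 hT4 hU with h | ⟨h, x, hx, hx3, rfl⟩
      · omega
      by_cases hA' : Act μ (((S.erase p).erase v).erase x)
      · rw [gp_act hA']; omega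
      exfalso
      simp only [Finset.mem_erase] at hx
      obtain ⟨hxv, hxp, hxS⟩ := hx
      have hvE : v ∈ S.erase p := Finset.mem_erase.2 ⟨(hne' hpv).symm, hv⟩
      have hxE : x ∈ (S.erase p).erase v := by simp [hxv, hxp, hxS]
      rw [dg_erase hvE, dg_erase hp] at hx3
      have hU3 : dg μ (((S.erase p).erase v).erase x) x = 3 := by
        rw [dg_erase hxE, dg_erase hvE, dg_erase hp, h0]; omega
      have hy : ∀ y ∈ ((S.erase p).erase v).erase x, 0 < μ x y →
          μ y p + μ y v + μ y x = 4 ∧ μ y x ≤ 2 ∧ dg μ S y = 4 := by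
        intro y hyU hxy
        have hyU' := hyU
        simp only [Finset.mem_erase] at hyU'
        obtain ⟨hyx, hyv, hyp, hyS⟩ := hyU'
        have hd : dg μ (((S.erase p).erase v).erase x) y
            = dg μ S y - μ y p - μ y v - μ y x := by
          rw [dg_erase hxE, dg_erase hvE, dg_erase hp]
        have hz : ¬ (1 ≤ dg μ (((S.erase p).erase v).erase x) y ∧
          dg μ (((S.erase p).erase v).erase x) y ≤ 3) := fun hh => hA' ⟨y, hyU, hh⟩
        have hnn : 0 ≤ dg μ (((S.erase p).erase v).erase x) y :=
          Finset.sum_nonneg fun _ _ => hn _ _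
        have := h4 y hyS
        have := h4 x hxS
        have := hn y p
        have := hn y v
        have hyx' : 0 < μ y x := by rw [hs]; exact hxy
        have f1 := hex y hyS x hxS hyx'
        have f2 : 0 < μ y p → dg μ S y + 3 - μ y p ≥ 6 := fun hh => by
          have := hex y hyS p hp hh; omega
        have f3 : 0 < μ y v → dg μ S y + 4 - μ y v ≥ 6 := fun hh => by
          have := hex y hyS v hv hh; omega
        omega
      obtain ⟨y1, hy1, hm1⟩ := exists_nbr (by omega : 0 < dg μ (((S.erase p).erase v).erase x) x)
      have g1 := hy y1 hy1 hm1
      have hd1 := dg_erase (μ := μ) hy1 x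
      have hs1 := hs x y1
      obtain ⟨y2, hy2, hm2⟩ := exists_nbr
        (by omega : 0 < dg μ ((((S.erase p).erase v).erase x).erase y1) x)
      have hy2' := Finset.mem_of_mem_erase hy2
      have g2 := hy y2 hy2' hm2
      have hs2 := hs x y2
      simp only [Finset.mem_erase] at hy1 hy2
      obtain ⟨a1, a2, a3, a4⟩ := hy1
      obtain ⟨b0, b1, b2, b3, b4⟩ := hy2
      have key : ∀ e, μ e p + μ e v + μ e x + μ e y1 + μ e y2 ≤ dg μ S e := by
        intro e
        have hsub : ({p, v, x, y1, y2} : Finset α) ⊆ S := by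
          intro z hz
          simp only [Finset.mem_insert, Finset.mem_singleton] at hz
          rcases hz with rfl | rfl | rfl | rfl | rfl <;> assumption
        have h := dg_mono hn hsub e
        have hpv' := hne' hpv
        unfold dg at h
        rw [Finset.sum_insert, Finset.sum_insert, Finset.sum_insert, Finset.sum_insert,
          Finset.sum_singleton] at h
        · unfold dg; linarith
        all_goals
          simp only [Finset.mem_insert, Finset.mem_singleton]
          try tauto
      have kp := key p
      have kv := key v
      have kx := key x
      have := h0 p
      have := h0 v
      have := h0 x
      have := hs p x
      have := hs p v
      have := hs p y1
      have := hs p y2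
      have := hs v x
      have := hs v y1
      have := hs v y2
      have := h4 x hxS
      have := hn x p
      have := hn x v
      have k1 := hex x hxS y1 a4 hm1
      have k2 := hex x hxS y2 b4 hm2
      omega
  · rw [gp_nact hA]
    have h04 : ∀ e ∈ S, dg μ S e = 0 ∨ dg μ S e = 4 := by
      intro e he
      have h1 : ¬ (1 ≤ dg μ S e ∧ dg μ S e ≤ 3) := fun hh => hA ⟨e, he, hh⟩
      have h2 := h4 e he
      have h3 : 0 ≤ dg μ S e := Finset.sum_nonneg fun _ _ => hn _ _
      omega
    by_cases hz : ∀ e ∈ S, dg μ S e = 0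
    · obtain ⟨a, ha⟩ := hne
      have hP := Phi_erase hs h0 ha
      have hT4 := sub4 _ (Finset.erase_subset a S)
      have hnn := Phi_nonneg hT4
      have hda := hz a ha
      refine ⟨_, Or.inl ⟨a, ha, hz, rfl⟩, by omega, ?_⟩
      intro U hU
      have := gp_le (μ := μ) U
      rcases hU with ⟨x, hx, hd, rfl⟩ | ⟨x, hx, y, hy, hxy, hm, rfl⟩
      · have hP2 := Phi_erase hs h0 hx
        have := dg_mono hn (Finset.erase_subset a S) x
        have := hz x (Finset.mem_of_mem_erase hx)
        omega
      · have := le_dg hn (Finset.mem_of_mem_erase hy) x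
        have := hz x (Finset.mem_of_mem_erase hx)
        omega
    · push Not at hz
      obtain ⟨e, he, hez⟩ := hz
      by_cases hex : ∃ a ∈ S, ∃ b ∈ S, 2 ≤ μ a b
      · obtain ⟨a, ha, b, hb, hab⟩ := hex
        have hP := Phi_erase2 hs h0 ha hb (hne' (by omega))
        have hT4 := sub4 _ (sub2 a b)
        have hnn := Phi_nonneg hT4
        have := h4 a ha
        have := h4 b hb
        refine ⟨_, Or.inr ⟨a, ha, b, hb, hne' (by omega), by omega, rfl⟩, by omega, ?_⟩
        intro U hU
        have := gp_le (μ := μ) U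
        rcases reply_bound hs h0 hT4 hU with h | ⟨h, -⟩ <;> omega
      · push Not at hex
        obtain ⟨f, hf, hef⟩ := exists_nbr (by have := h04 e he; omega : 0 < dg μ S e)
        have hP := Phi_erase2 hs h0 he hf (hne' hef)
        have hT4 := sub4 _ (sub2 e f)
        have hnn := Phi_nonneg hT4
        have := h4 e he
        have := h4 f hf
        refine ⟨_, Or.inr ⟨e, he, f, hf, hne' hef, hef, rfl⟩, by omega, ?_⟩
        intro U hU
        have := gp_le (μ := μ) U
        rcases reply_bound hs h0 hT4 hU with h | ⟨h, x, hx, hx3, rfl⟩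
        · omega
        have hA' : Act μ (((S.erase e).erase f).erase x) := by
          have hfE : f ∈ S.erase e := Finset.mem_erase.2 ⟨(hne' hef).symm, hf⟩
          obtain ⟨y, hy, hxy⟩ := exists_nbr (by omega : 0 < dg μ ((S.erase e).erase f) x)
          have hyS := sub2 _ _ hy
          have hxS := sub2 _ _ hx
          refine ⟨y, Finset.mem_erase.2 ⟨(hne' hxy).symm, hy⟩, ?_⟩
          rw [dg_erase hx, dg_erase hfE, dg_erase he]
          have hsx := hs x y
          have m1 := hex y hyS x hxS
          have m2 := hex y hyS e he
          have m3 := hex y hyS f hf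
          have n2 := hn y e
          have n3 := hn y f
          have := le_dg hn hxS y
          rcases h04 y hyS with h | h <;> omega
        rw [gp_act hA']; omega

end Abs

section Game
variable {V : Type} [Fintype V] [DecidableEq V]

/-- intersection multiplicity of two distinct edges -/
def mu (e f : Finset V) : ℤ := if e = f then 0 else ((e ∩ f).card : ℤ)

theorem mu_symm (a b : Finset V) : mu a b = mu b a := by
  unfold mu; rw [Finset.inter_comm]; simp only [eq_comm]

theorem mu_self (a : Finset V) : mu a a = 0 := by simp [mu]

theorem mu_nonneg (a b : Finset V) : 0 ≤ mu a b := by unfold mu; split_ifs <;> omega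

/-- vertex degree -/
def deg (S : Finset (Finset V)) (v : V) : ℤ := ((S.filter (fun e => v ∈ e)).card : ℤ)

theorem dg_eq {S : Finset (Finset V)} {e : Finset V} (he : e ∈ S) :
    dg mu S e = ∑ u ∈ e, (deg S u - 1) := by
  have h1 : ∑ f ∈ S, ((e ∩ f).card : ℤ) = ∑ u ∈ e, deg S u := by
    have : ∀ f : Finset V, ((e ∩ f).card : ℤ) = ∑ u ∈ e, if u ∈ f then 1 else 0 := by
      intro f
      rw [← Finset.filter_mem_eq_inter, Finset.card_filter]; push_cast; rfl
    simp only [this]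
    rw [Finset.sum_comm]
    apply Finset.sum_congr rfl
    intro u _
    unfold deg
    rw [Finset.card_filter]; push_cast; rfl
  have h2 : ∑ f ∈ S, ((e ∩ f).card : ℤ) = (e.card : ℤ) + ∑ f ∈ S.erase e, ((e ∩ f).card : ℤ) := by
    rw [← Finset.add_sum_erase S _ he, Finset.inter_self]
  have h3 : dg mu S e = ∑ f ∈ S.erase e, ((e ∩ f).card : ℤ) := by
    unfold dg
    rw [← Finset.add_sum_erase S _ he, mu_self, zero_add]
    apply Finset.sum_congr rfl
    intro f hf
    unfold mu
    rw [if_neg (Finset.ne_of_mem_erase hf).symm]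
  rw [h3, Finset.sum_sub_distrib, ← h1, h2]
  simp

theorem dg_le {S : Finset (Finset V)} (h4 : ∀ e ∈ S, e.card = 4)
    (hΔ : ∀ v : V, deg S v ≤ 2) (e : Finset V) (he : e ∈ S) : dg mu S e ≤ 4 := by
  rw [dg_eq he]
  have : ∑ u ∈ e, (deg S u - 1) ≤ ∑ u ∈ e, 1 :=
    Finset.sum_le_sum fun u _ => by have := hΔ u; omega
  have h := h4 e he
  simp [h] at this ⊢
  linarith

theorem Phi_le {S : Finset (Finset V)} (h4 : ∀ e ∈ S, e.card = 4)
    (hΔ : ∀ v : V, deg S v ≤ 2) : Phi mu S ≤ 7 * Fintype.card V := by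
  have h1 : 2 * Phi mu S = ∑ e ∈ S, ∑ u ∈ e, (11 - 2 * deg S u) := by
    unfold Phi
    rw [Finset.mul_sum]
    apply Finset.sum_congr rfl
    intro e he
    rw [dg_eq he, Finset.sum_sub_distrib, Finset.sum_sub_distrib, ← Finset.mul_sum]
    simp [h4 e he]; ring
  have h2 : ∑ e ∈ S, ∑ u ∈ e, (11 - 2 * deg S u) = ∑ u : V, deg S u * (11 - 2 * deg S u) := by
    have : ∀ e : Finset V, ∑ u ∈ e, (11 - 2 * deg S u)
        = ∑ u : V, if u ∈ e then (11 - 2 * deg S u) else 0 := by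
      intro e; simp
    simp only [this]
    rw [Finset.sum_comm]
    apply Finset.sum_congr rfl
    intro u _
    rw [← Finset.sum_filter, Finset.sum_const, nsmul_eq_mul]; rfl
  have h3 : ∑ u : V, deg S u * (11 - 2 * deg S u) ≤ ∑ _u : V, 14 := by
    apply Finset.sum_le_sum
    intro u _
    have a := hΔ u
    have b : 0 ≤ deg S u := by unfold deg; omega
    generalize deg S u = d at *
    interval_cases d <;> norm_num
  simp at h3
  linarith

theorem gv_true {S : Finset (Finset V)} {v : V} (hv : v ∈ playable S) :
    gameVal true S ≤ 1 + gameVal false (S.filter (fun e => v ∉ e)) := by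
  rw [gameVal, dif_pos ⟨v, hv⟩, if_pos rfl]
  apply Nat.add_le_add_left
  exact Finset.inf'_le (f := fun v : {x // x ∈ playable S} =>
    gameVal (!true) (S.filter (fun e => v.1 ∉ e))) (Finset.mem_attach _ ⟨v, hv⟩)

theorem gv_false {S : Finset (Finset V)} {n : ℕ}
    (h : ∀ v ∈ playable S, 1 + gameVal true (S.filter (fun e => v ∉ e)) ≤ n) :
    gameVal false S ≤ n := by
  rw [gameVal]
  split_ifs with h1 h2
  · exact absurd h2 (by simp)
  · obtain ⟨v, -, hv⟩ := Finset.exists_mem_eq_sup' (Finset.attach_nonempty_iff.mpr h1)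
      (fun v : {x // x ∈ playable S} => gameVal (!false) (S.filter (fun e => v.1 ∉ e)))
    rw [hv]
    exact h v.1 v.2
  · omega

theorem reply_of {S : Finset (Finset V)} (h4 : ∀ e ∈ S, e.card = 4)
    (hΔ : ∀ v : V, deg S v ≤ 2) {v : V} (hv : v ∈ playable S) :
    Reply mu S (S.filter (fun e => v ∉ e)) := by
  simp only [playable, Finset.mem_filter, Finset.mem_univ, true_and] at hv
  obtain ⟨e, he, hve⟩ := hv
  have heF : e ∈ S.filter (fun e => v ∈ e) := Finset.mem_filter.2 ⟨he, hve⟩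
  by_cases h2 : ∃ f ∈ S, v ∈ f ∧ e ≠ f
  · obtain ⟨f, hf, hvf, hef⟩ := h2
    right
    refine ⟨e, he, f, hf, hef, ?_, ?_⟩
    · unfold mu
      rw [if_neg hef]
      have : 0 < (e ∩ f).card := Finset.card_pos.2 ⟨v, Finset.mem_inter.2 ⟨hve, hvf⟩⟩
      omega
    · have hsub : ({e, f} : Finset (Finset V)) ⊆ S.filter (fun e => v ∈ e) := by
        intro z hz
        simp only [Finset.mem_insert, Finset.mem_singleton] at hz
        rcases hz with rfl | rfl <;> simp [*]
      have heq := Finset.eq_of_subset_of_card_le hsub (by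
        have := hΔ v
        unfold deg at this
        rw [Finset.card_pair hef]; omega)
      ext z
      have hz := Finset.ext_iff.1 heq z
      simp only [Finset.mem_insert, Finset.mem_singleton, Finset.mem_filter] at hz
      simp only [Finset.mem_filter, Finset.mem_erase]
      tauto
  · push Not at h2
    left
    refine ⟨e, he, ?_, ?_⟩
    · rw [dg_eq he, ← Finset.add_sum_erase e _ hve]
      have h1 : deg S v = 1 := by
        have : S.filter (fun e => v ∈ e) = {e} := by
          ext z
          simp only [Finset.mem_filter, Finset.mem_singleton]
          constructor
          · rintro ⟨a, b⟩; exact (h2 z a b).symm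
          · rintro rfl; exact ⟨he, hve⟩
        unfold deg
        rw [this]; simp
      have hle : ∑ u ∈ e.erase v, (deg S u - 1) ≤ ∑ u ∈ e.erase v, 1 :=
        Finset.sum_le_sum fun u _ => by have := hΔ u; omega
      have hc : (e.erase v).card = 3 := by rw [Finset.card_erase_of_mem hve, h4 e he]
      rw [Finset.sum_const, hc] at hle
      simp at hle
      simp at *
      omega
    · ext z
      simp only [Finset.mem_filter, Finset.mem_erase]
      constructor
      · rintro ⟨a, b⟩; exact ⟨fun h => b (h ▸ hve), a⟩
      · rintro ⟨a, b⟩; exact ⟨b, fun h => a (h2 z b h).symm⟩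

theorem emove_of {S T : Finset (Finset V)} (h4 : ∀ e ∈ S, e.card = 4)
    (hΔ : ∀ v : V, deg S v ≤ 2) (h : EMove mu S T) :
    ∃ v ∈ playable S, T = S.filter (fun e => v ∉ e) := by
  rcases h with ⟨x, hx, hz, rfl⟩ | ⟨x, hx, y, hy, hxy, hm, rfl⟩
  · obtain ⟨v, hv⟩ := Finset.card_pos.1 (by rw [h4 x hx]; omega : 0 < x.card)
    refine ⟨v, by simp only [playable, Finset.mem_filter, Finset.mem_univ, true_and]; exact ⟨x, hx, hv⟩, ?_⟩
    ext z
    simp only [Finset.mem_filter, Finset.mem_erase]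
    constructor
    · rintro ⟨a, b⟩
      refine ⟨b, fun hvz => ?_⟩
      have h1 := le_dg mu_nonneg b x
      rw [hz x hx] at h1
      unfold mu at h1
      rw [if_neg (Ne.symm a)] at h1
      have : 0 < (x ∩ z).card := Finset.card_pos.2 ⟨v, Finset.mem_inter.2 ⟨hv, hvz⟩⟩
      omega
    · rintro ⟨a, b⟩; exact ⟨fun h => b (h ▸ hv), a⟩
  · unfold mu at hm
    rw [if_neg hxy] at hm
    obtain ⟨v, hv⟩ := Finset.card_pos.1 (by omega : 0 < (x ∩ y).card)
    obtain ⟨hvx, hvy⟩ := Finset.mem_inter.1 hv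
    refine ⟨v, by simp only [playable, Finset.mem_filter, Finset.mem_univ, true_and]; exact ⟨x, hx, hvx⟩, ?_⟩
    have hsub : ({x, y} : Finset (Finset V)) ⊆ S.filter (fun e => v ∈ e) := by
      intro z hz
      simp only [Finset.mem_insert, Finset.mem_singleton] at hz
      rcases hz with rfl | rfl <;> simp [*]
    have heq := Finset.eq_of_subset_of_card_le hsub (by
      have := hΔ v
      unfold deg at this
      rw [Finset.card_pair hxy]; omega)
    ext z
    have hz := Finset.ext_iff.1 heq z
    simp only [Finset.mem_insert, Finset.mem_singleton, Finset.mem_filter] at hz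
    simp only [Finset.mem_filter, Finset.mem_erase]
    tauto

theorem deg_mono {S T : Finset (Finset V)} (h : T ⊆ S) (v : V) : deg T v ≤ deg S v := by
  unfold deg
  exact_mod_cast Finset.card_le_card (Finset.filter_subset_filter _ h)

theorem filter_lt {S : Finset (Finset V)} {v : V} (hv : v ∈ playable S) :
    (S.filter (fun e => v ∉ e)).card < S.card := by
  simp only [playable, Finset.mem_filter, Finset.mem_univ, true_and] at hv
  obtain ⟨e, he, hve⟩ := hv
  exact Finset.card_lt_card (Finset.filter_ssubset.mpr ⟨e, he, by simp [hve]⟩)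

theorem main (n : ℕ) : ∀ S : Finset (Finset V), S.card ≤ n → (∀ e ∈ S, e.card = 4) →
    (∀ v : V, deg S v ≤ 2) → 18 * (gameVal true S : ℤ) ≤ gp mu S := by
  induction n with
  | zero =>
    intro S hS _ _
    have : S = ∅ := by simpa using hS
    subst this
    rw [gameVal]
    have h1 : ¬ (playable (∅ : Finset (Finset V))).Nonempty := by simp [playable]
    rw [dif_neg h1, gp_nact]
    · simp [Phi]
    · simp [Act]
  | succ n ih =>
    intro S hS h4 hΔ
    rcases S.eq_empty_or_nonempty with rfl | hne
    · exact ih _ (by simp) h4 hΔ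
    obtain ⟨T, hT, h18, hrep⟩ := strategy mu_symm mu_self mu_nonneg hne (dg_le h4 hΔ)
    obtain ⟨v, hv, rfl⟩ := emove_of h4 hΔ hT
    have b1 := gv_true hv
    have hl1 := filter_lt hv
    have hsub1 : S.filter (fun e => v ∉ e) ⊆ S := Finset.filter_subset _ _
    have h4' : ∀ e ∈ S.filter (fun e => v ∉ e), e.card = 4 := fun e he => h4 e (hsub1 he)
    have hΔ' : ∀ u : V, deg (S.filter (fun e => v ∉ e)) u ≤ 2 :=
      fun u => (deg_mono hsub1 u).trans (hΔ u)
    generalize S.filter (fun e => v ∉ e) = T at *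
    have b2 : gameVal false T ≤ ((gp mu S - 18) / 18).toNat := by
      apply gv_false
      intro w hw
      have hl2 := filter_lt hw
      have hsub2 : T.filter (fun e => w ∉ e) ⊆ T := Finset.filter_subset _ _
      have h := hrep _ (reply_of h4' hΔ' hw)
      have hi := ih (T.filter (fun e => w ∉ e)) (by omega) (fun e he => h4' e (hsub2 he))
        (fun u => (deg_mono hsub2 u).trans (hΔ' u))
      omega
    omega

end Game

end TG

/-- If `H` is a `4`-uniform hypergraph with maximum degree at most `2`,
then `τ_g(H) ≤ (7/18) n(H)`. -/
theorem gameTransversalNum_le_of_four_uniform_maxDegree_le_two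
    {V : Type} [Fintype V] [DecidableEq V] (E : Finset (Finset V))
    (h4 : ∀ e ∈ E, e.card = 4)
    (hΔ : ∀ v : V, (E.filter (fun e => v ∈ e)).card ≤ 2) :
    (gameTransversalNum E : ℚ) ≤ (7 / 18) * Fintype.card V := by
  have hd : ∀ v : V, TG.deg E v ≤ 2 := fun v => by
    unfold TG.deg; exact_mod_cast hΔ v
  have h1 := TG.main E.card E le_rfl h4 hd
  have h2 := TG.gp_le (μ := TG.mu) E
  have h3 := TG.Phi_le h4 hd
  have h : 18 * (gameTransversalNum E : ℤ) ≤ 7 * Fintype.card V := by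
    unfold gameTransversalNum; omega
  have h' : 18 * (gameTransversalNum E : ℚ) ≤ 7 * Fintype.card V := by exact_mod_cast h
  linarith
end
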